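/- arXiv:2108.00876 — 5 statements merged into one kernel-verified Lean document; each statement's English description precedes it below -/
import Mathlib

section
/- Let θ ∈ (0, π), let n ≥ 1, let λ : {1,…,n} → ℝ, and let 1 ≤ m ≤ n. Then the following are equivalent: (i) for every subset I ⊆ {1,…,n} with |I| = m one has ∑_{i∈I} arccot(λᵢ) < θ; (ii) for every nonempty subset K ⊆ {1,…,n} with |K| ≤ m one has Re(∏_{i∈K} (λᵢ + i)) − cot(θ)·Im(∏_{i∈K} (λᵢ + i)) > 0. -/
/-!
Each factor `x + i` has argument `arccot x`, so the product over `K` has argument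
`S K = ∑ i ∈ K, arccot (λ i)`, and `Re - cot θ · Im` is a positive multiple of `sin (θ - S K)`.
If `S K < θ` then `0 < θ - S K < π` and this sine is positive. Conversely, build `K` up one element
at a time: `S` jumps by at most `π` at each step, so it cannot cross `θ` without landing in
`[θ, θ + π]`, where the sine is nonpositive. As `arccot` is positive, bounding `S` on the sets of
size `m` is the same as bounding it on all smaller ones.
-/

open Real

/-- The arccotangent with range `(0, π)`. -/
noncomputable def arccot (x : ℝ) : ℝ := π / 2 - Real.arctan x

lemma arccot_pos (x : ℝ) : 0 < arccot x :=
  sub_pos.2 (arctan_lt_pi_div_two x)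

lemma arccot_lt_pi (x : ℝ) : arccot x < π := by
  unfold arccot
  linarith [neg_pi_div_two_lt_arctan x]

lemma sin_arccot (x : ℝ) : sin (arccot x) = 1 / √(1 + x ^ 2) := by
  rw [arccot, sin_pi_div_two_sub, cos_arctan]

lemma cos_arccot (x : ℝ) : cos (arccot x) = x / √(1 + x ^ 2) := by
  rw [arccot, cos_pi_div_two_sub, sin_arctan]

lemma ofReal_add_I_eq_sqrt_mul_exp_arccot (x : ℝ) :
    (x : ℂ) + Complex.I = (√(1 + x ^ 2) : ℝ) * Complex.exp (arccot x * Complex.I) := by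
  have hr : √(1 + x ^ 2) ≠ 0 := by positivity
  apply Complex.ext
  · rw [Complex.re_ofReal_mul, Complex.exp_ofReal_mul_I_re, cos_arccot, mul_div_cancel₀ _ hr]
    simp
  · rw [Complex.im_ofReal_mul, Complex.exp_ofReal_mul_I_im, sin_arccot, mul_div_cancel₀ _ hr]
    simp

lemma prod_ofReal_add_I_eq_prod_sqrt_mul_exp_sum_arccot {ι : Type*} (s : Finset ι) (x : ι → ℝ) :
    ∏ i ∈ s, ((x i : ℂ) + Complex.I) = (∏ i ∈ s, √(1 + x i ^ 2) : ℝ) *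
      Complex.exp ((∑ i ∈ s, arccot (x i) : ℝ) * Complex.I) := by
  simp only [ofReal_add_I_eq_sqrt_mul_exp_arccot, Finset.prod_mul_distrib, ← Complex.exp_sum,
    ← Finset.sum_mul, Complex.ofReal_prod, Complex.ofReal_sum]

lemma re_sub_cot_mul_im_ofReal_mul_exp {θ : ℝ} (hθ : sin θ ≠ 0) (r φ : ℝ) :
    (r * Complex.exp (φ * Complex.I)).re - cos θ / sin θ * (r * Complex.exp (φ * Complex.I)).im =
      r / sin θ * sin (θ - φ) := by
  rw [Complex.re_ofReal_mul, Complex.im_ofReal_mul, Complex.exp_ofReal_mul_I_re,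
    Complex.exp_ofReal_mul_I_im, sin_sub]
  field_simp

lemma re_sub_cot_mul_im_prod_ofReal_add_I_pos_iff {ι : Type*} {θ : ℝ} (hθ : 0 < sin θ)
    (s : Finset ι) (x : ι → ℝ) :
    0 < (∏ i ∈ s, ((x i : ℂ) + Complex.I)).re
          - cos θ / sin θ * (∏ i ∈ s, ((x i : ℂ) + Complex.I)).im ↔
      0 < sin (θ - ∑ i ∈ s, arccot (x i)) := by
  have hr : 0 < ∏ i ∈ s, √(1 + x i ^ 2) := Finset.prod_pos fun i _ ↦ by positivity
  rw [prod_ofReal_add_I_eq_prod_sqrt_mul_exp_sum_arccot, re_sub_cot_mul_im_ofReal_mul_exp hθ.ne',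
    mul_pos_iff_of_pos_left (div_pos hr hθ)]

lemma lt_of_sin_sub_pos {x y : ℝ} (hsin : 0 < sin (x - y)) (hy : y ≤ x + π) : y < x := by
  by_contra! hxy
  exact hsin.not_ge (sin_nonpos_of_nonpos_of_neg_pi_le (by linarith) (by linarith))

lemma exists_superset_card_eq_of_le_enatCard {ι : Type*} {s : Finset ι} {m : ℕ} (hs : s.card ≤ m)
    (hm : (m : ℕ∞) ≤ ENat.card ι) : ∃ t, s ⊆ t ∧ t.card = m := by
  cases fintypeOrInfinite ι
  · exact Finset.exists_superset_card_eq hs (by simpa using hm)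
  · exact Infinite.exists_superset_card_eq s m hs

lemma forall_card_eq_sum_lt_iff_forall_card_le {ι M : Type*} [AddCommMonoid M] [Preorder M]
    [AddLeftMono M] {a : ι → M} (ha : ∀ i, 0 ≤ a i) {m : ℕ} (hm : (m : ℕ∞) ≤ ENat.card ι) (c : M) :
    (∀ s : Finset ι, s.card = m → ∑ i ∈ s, a i < c) ↔
      ∀ s : Finset ι, s.card ≤ m → ∑ i ∈ s, a i < c := by
  refine ⟨fun h s hs ↦ ?_, fun h s hs ↦ h s hs.le⟩
  obtain ⟨t, hst, ht⟩ := exists_superset_card_eq_of_le_enatCard hs hm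
  exact (Finset.sum_le_sum_of_subset_of_nonneg hst fun i _ _ ↦ ha i).trans_lt (h t ht)

lemma forall_sum_lt_iff_forall_nonempty_sin_pos {ι : Type*} {𝒮 : Set (Finset ι)}
    (h𝒮 : IsLowerSet 𝒮) {a : ι → ℝ} (ha : ∀ i, a i ∈ Set.Icc 0 π) {θ : ℝ}
    (hθ : θ ∈ Set.Ioo 0 π) :
    (∀ s ∈ 𝒮, ∑ i ∈ s, a i < θ) ↔
      ∀ s : Finset ι, s.Nonempty → s ∈ 𝒮 → 0 < sin (θ - ∑ i ∈ s, a i) := by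
  constructor
  · intro h s _ hs
    have hsum : 0 ≤ ∑ i ∈ s, a i := Finset.sum_nonneg fun i _ ↦ (ha i).1
    exact sin_pos_of_pos_of_lt_pi (sub_pos.2 (h s hs)) (by linarith [hθ.2])
  · intro h s
    induction s using Finset.cons_induction with
    | empty => simpa using fun _ ↦ hθ.1
    | cons i s hi ih =>
      intro hs
      have hlt : ∑ j ∈ s, a j < θ := ih (h𝒮 (Finset.subset_cons hi) hs)
      refine lt_of_sin_sub_pos (h _ (Finset.cons_nonempty hi) hs) ?_
      rw [Finset.sum_cons]
      linarith [(ha i).2]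

theorem cone_iff_positivity_general {ι : Type*} {θ : ℝ} (hθ : θ ∈ Set.Ioo 0 π) (lam : ι → ℝ)
    {m : ℕ} (hm : (m : ℕ∞) ≤ ENat.card ι) :
    (∀ I : Finset ι, I.card = m → ∑ i ∈ I, arccot (lam i) < θ) ↔
      (∀ K : Finset ι, K.Nonempty → K.card ≤ m →
        0 < (∏ i ∈ K, ((lam i : ℂ) + Complex.I)).re
              - (cos θ / sin θ) * (∏ i ∈ K, ((lam i : ℂ) + Complex.I)).im) := by
  have hcard : IsLowerSet {K : Finset ι | K.card ≤ m} :=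
    fun _ _ hst ht ↦ (Finset.card_le_card hst).trans ht
  simp only [re_sub_cot_mul_im_prod_ofReal_add_I_pos_iff (sin_pos_of_mem_Ioo hθ)]
  rw [forall_card_eq_sum_lt_iff_forall_card_le (fun i ↦ (arccot_pos (lam i)).le) hm]
  exact forall_sum_lt_iff_forall_nonempty_sin_pos hcard
    (fun i ↦ ⟨(arccot_pos (lam i)).le, (arccot_lt_pi (lam i)).le⟩) hθ

/-- For `θ ∈ (0, π)`, `n ≥ 1`, `λ : {1,…,n} → ℝ` and `1 ≤ m ≤ n`,
the following are equivalent: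
(i) for every subset `I` with `|I| = m`, `∑_{i ∈ I} arccot λᵢ < θ`;
(ii) for every nonempty subset `K` with `|K| ≤ m`,
`Re (∏_{i ∈ K} (λᵢ + i)) − cot θ · Im (∏_{i ∈ K} (λᵢ + i)) > 0`. -/
theorem cone_iff_positivity (θ : ℝ) (hθ : θ ∈ Set.Ioo 0 π) (n : ℕ) (hn : 1 ≤ n)
    (lam : Fin n → ℝ) (m : ℕ) (hm1 : 1 ≤ m) (hmn : m ≤ n) :
    (∀ I : Finset (Fin n), I.card = m → ∑ i ∈ I, arccot (lam i) < θ) ↔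
      (∀ K : Finset (Fin n), K.Nonempty → K.card ≤ m →
        0 < (∏ i ∈ K, ((lam i : ℂ) + Complex.I)).re
              - (Real.cos θ / Real.sin θ) * (∏ i ∈ K, ((lam i : ℂ) + Complex.I)).im) :=
  cone_iff_positivity_general hθ lam (by simpa using hmn)
end

section
/- Let n ≥ 2, let 0 < θ < Θ < π, and let θ₁, …, θ_n ∈ (0, π). Assume that ∑_{i∈I} θᵢ < θ for every subset I of {1, …, n} with |I| ≤ n − 1, and that sin(θ − ∑_{i=1}^n θᵢ) > −sin((Θ − θ)/2). Then ∑_{i=1}^n θᵢ < Θ. -/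
/-!
Put `S = ∑ θᵢ` and suppose `Θ ≤ S`. Since removing any `θᵢ` brings the sum below `θ < S`, every
`θᵢ` is positive, and hence below `θ`, because it is one term of a sum that omits another index.
Splitting off one term gives `S < 2θ`. Thus `S - θ` lies in `[a, π - a]` with `a = (Θ - θ) / 2`,
where the sine is at least `sin a`; this contradicts `sin (θ - S) > -sin a`.
-/

open Real

lemma sum_lt_two_nsmul_of_sum_erase_lt {ι M : Type*} [DecidableEq ι] [AddCommGroup M]
    [PartialOrder M] [IsOrderedAddMonoid M] {s : Finset ι} (hs : s.Nontrivial) {f : ι → M} {c : M}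
    (herase : ∀ i ∈ s, ∑ j ∈ s.erase i, f j < c) (hc : c ≤ ∑ i ∈ s, f i) :
    ∑ i ∈ s, f i < 2 • c := by
  have hpos : ∀ i ∈ s, 0 < f i := fun i hi ↦ by
    have hlt : ∑ j ∈ s.erase i, f j < ∑ j ∈ s, f j := (herase i hi).trans_le hc
    rwa [← Finset.add_sum_erase s f hi, lt_add_iff_pos_left] at hlt
  obtain ⟨i, hi, k, hk, hik⟩ := hs
  have hfi : f i < c := calc
    f i ≤ ∑ j ∈ s.erase k, f j :=
      Finset.single_le_sum (fun j hj ↦ (hpos j (Finset.mem_of_mem_erase hj)).le)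
        (Finset.mem_erase.2 ⟨hik, hi⟩)
    _ < c := herase k hk
  calc
    ∑ j ∈ s, f j = f i + ∑ j ∈ s.erase i, f j := (Finset.add_sum_erase s f hi).symm
    _ < c + c := add_lt_add hfi (herase i hi)
    _ = 2 • c := (two_nsmul c).symm

lemma sin_le_sin_of_mem_Icc_pi_sub {a x : ℝ} (ha : -(π / 2) ≤ a) (hx : x ∈ Set.Icc a (π - a)) :
    sin a ≤ sin x := by
  have hdist : |π / 2 - x| ≤ π / 2 - a := abs_le.2 ⟨by linarith [hx.2], by linarith [hx.1]⟩
  rw [← cos_pi_div_two_sub a, ← cos_pi_div_two_sub x, ← cos_abs (π / 2 - x)]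
  exact cos_le_cos_of_nonneg_of_le_pi (abs_nonneg _) (by linarith) hdist

lemma lt_of_neg_sin_half_sub_lt_sin_sub {θ Θ S : ℝ} (hθΘ : θ ≤ Θ) (hadd : θ + Θ ≤ 2 * π)
    (hS : S ≤ 2 * θ) (hsin : -sin ((Θ - θ) / 2) < sin (θ - S)) : S < Θ := by
  by_contra! hΘS
  have hle : sin ((Θ - θ) / 2) ≤ sin (S - θ) :=
    sin_le_sin_of_mem_Icc_pi_sub (by linarith [pi_pos]) ⟨by linarith, by linarith⟩
  rw [← neg_sub S θ, sin_neg] at hsin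
  linarith

theorem sum_lt_Theta_general {ι : Type*} [DecidableEq ι] {s : Finset ι} (hs : s.Nontrivial)
    {f : ι → ℝ} {θ Θ : ℝ} (hθΘ : θ ≤ Θ) (hadd : θ + Θ ≤ 2 * π)
    (herase : ∀ i ∈ s, ∑ j ∈ s.erase i, f j < θ)
    (hsin : -sin ((Θ - θ) / 2) < sin (θ - ∑ i ∈ s, f i)) :
    ∑ i ∈ s, f i < Θ := by
  by_contra! hΘS
  have hS : ∑ i ∈ s, f i < 2 • θ := sum_lt_two_nsmul_of_sum_erase_lt hs herase (hθΘ.trans hΘS)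
  rw [two_nsmul, ← two_mul] at hS
  exact hΘS.not_gt (lt_of_neg_sin_half_sub_lt_sin_sub hθΘ hadd hS.le hsin)

/-- Let `n ≥ 2`, `0 < θ < Θ < π`, and `θ₁, …, θ_n ∈ (0, π)`.
If `∑_{i ∈ I} θᵢ < θ` for every subset `I` with `|I| ≤ n − 1`, and
`sin (θ − ∑ θᵢ) > −sin ((Θ − θ)/2)`, then `∑ θᵢ < Θ`. -/
theorem sum_lt_Theta (n : ℕ) (hn : 2 ≤ n) (θ Θ : ℝ) (hθ : 0 < θ) (hθΘ : θ < Θ) (hΘ : Θ < π)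
    (θs : Fin n → ℝ) (hθs : ∀ i, θs i ∈ Set.Ioo 0 π)
    (hcone : ∀ I : Finset (Fin n), I.card ≤ n - 1 → ∑ i ∈ I, θs i < θ)
    (hsin : Real.sin (θ - ∑ i, θs i) > -Real.sin ((Θ - θ) / 2)) :
    (∑ i, θs i) < Θ := by
  have huniv : (Finset.univ : Finset (Fin n)).Nontrivial :=
    Finset.one_lt_card_iff_nontrivial.1 (by rwa [Finset.card_fin])
  exact sum_lt_Theta_general huniv hθΘ.le (by linarith) (fun i _ ↦ hcone _ (by simp)) hsin
end

section
/- Let θ ∈ (0, π) and let z be a real number with z > −1/sin(θ). Suppose λ₁, λ₂, λ₃ are positive real numbers satisfying λᵢλⱼ > 1/sin²(θ) for all i ≠ j and the equation λ₁λ₂λ₃ = (1/sin²(θ))·(λ₁ + λ₂ + λ₃ + 2z). Then g := λ₁λ₂ + λ₁λ₃ + λ₂λ₃ + 2z(λ₁ + λ₂ + λ₃) + 3z² > 0. -/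
open Real

/-!
Write `k = csc θ` and eliminate `λ₃` by means of the equation. Then `(λ₁λ₂ - k²) g` becomes a
quadratic polynomial in `z`. Expanded around the threshold `z = -k`, its constant term is the square
of `(λ₁ - k)(λ₂ - k)`, and its other two coefficients are visibly positive.
-/

theorem sub_sq_mul_discriminant_eq {R : Type*} [CommRing R] {k z a b c : R}
    (heq : a * b * c = k ^ 2 * (a + b + c + 2 * z)) :
    (a * b - k ^ 2) * (a * b + a * c + b * c + 2 * z * (a + b + c) + 3 * z ^ 2) =
      ((a - k) * (b - k)) ^ 2
        + 2 * (a * (b - k) ^ 2 + b * (a - k) ^ 2 + k * (a * b - k ^ 2)) * (z + k)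
        + (3 * (a * b) + k ^ 2) * (z + k) ^ 2 := by
  linear_combination (a + b + 2 * z) * heq

theorem discriminant_pos_general {R : Type*} [CommRing R] [LinearOrder R] [IsStrictOrderedRing R]
    {k z a b c : R} (hk : 0 < k) (hz : -k < z) (ha : 0 < a) (hb : 0 < b) (hab : k ^ 2 < a * b)
    (heq : a * b * c = k ^ 2 * (a + b + c + 2 * z)) :
    0 < a * b + a * c + b * c + 2 * z * (a + b + c) + 3 * z ^ 2 := by
  have hzk : 0 < z + k := neg_lt_iff_pos_add.mp hz
  have hab' : 0 < a * b - k ^ 2 := sub_pos.mpr hab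
  refine pos_of_mul_pos_right ?_ hab'.le
  rw [sub_sq_mul_discriminant_eq heq]
  positivity

/-- Let `θ ∈ (0, π)` and `z > −1/sin θ`. If `λ₁, λ₂, λ₃ > 0` satisfy
`λᵢλⱼ > 1/sin²θ` for all `i ≠ j` and `λ₁λ₂λ₃ = (1/sin²θ)(λ₁ + λ₂ + λ₃ + 2z)`, then
`g := λ₁λ₂ + λ₁λ₃ + λ₂λ₃ + 2z(λ₁ + λ₂ + λ₃) + 3z² > 0`. -/
theorem discriminant_pos (θ : ℝ) (hθ : θ ∈ Set.Ioo 0 π) (z : ℝ)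
    (hz : -(1 / Real.sin θ) < z) (l1 l2 l3 : ℝ)
    (h1 : 0 < l1) (h2 : 0 < l2) (h3 : 0 < l3)
    (h12 : 1 / Real.sin θ ^ 2 < l1 * l2)
    (h13 : 1 / Real.sin θ ^ 2 < l1 * l3)
    (h23 : 1 / Real.sin θ ^ 2 < l2 * l3)
    (heq : l1 * l2 * l3 = (1 / Real.sin θ ^ 2) * (l1 + l2 + l3 + 2 * z)) :
    0 < l1 * l2 + l1 * l3 + l2 * l3 + 2 * z * (l1 + l2 + l3) + 3 * z ^ 2 := by
  simp only [← one_div_pow] at h12 heq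
  exact discriminant_pos_general (one_div_pos.mpr (sin_pos_of_mem_Ioo hθ)) hz h1 h2 h12 heq
end

section
/- Let θ ∈ (0, π) and let z > −1/sin(θ) be a real number. Suppose λ₁, λ₂, λ₃ are positive real numbers satisfying λᵢλⱼ > 1/sin²(θ) for all i ≠ j and λ₁λ₂λ₃ = (1/sin²(θ))·(λ₁ + λ₂ + λ₃ + 2z). Set S := λ₁ + λ₂ + λ₃ and define a := 2(λ₂ + λ₃ + 2z)(S + 2z), b := 2(λ₃ + z)(S + 2z), c := 2(λ₁ + λ₃ + 2z)(S + 2z). Then a > 0, c > 0, and ac − b² > 0; consequently the quadratic form (v₁, v₂) ↦ a v₁² + 2b v₁v₂ + c v₂² is positive definite on ℝ². -/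
open Real

/-! Write `k = csc θ` and `μᵢ = λᵢ + z`. The equation reads `λ₁(λ₂λ₃ - k²) = k²(λ₂ + λ₃ + 2z)`,
and by AM-GM `λ₂λ₃ > k²` forces `λ₂ + λ₃ > 2k > -2z`; hence `λ₁ ≥ 0` and both factors of `a` are
positive. The determinant `ac - b²` is `4(S + 2z)²` times the second elementary symmetric
polynomial `e₂(μ)`. For `z ≥ 0` it is clear that `e₂(μ) > 0`. For `z < 0` the equation turns
`k²e₂(μ)` into `(λ₂λ₃ - k²)((λ₁ - k)² + 2λ₁(z + k)) + k²(k² - z²)`, where `|z| < k`. -/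

section

variable {R : Type*} [CommRing R] [LinearOrder R] [IsStrictOrderedRing R]

section BinaryForm

variable {a b c : R}

theorem pos_right_of_sq_lt_mul (ha : 0 < a) (h : b ^ 2 < a * c) : 0 < c :=
  pos_of_mul_pos_right ((sq_nonneg b).trans_lt h) ha.le

theorem binary_form_pos_of_sq_lt_mul (ha : 0 < a) (h : b ^ 2 < a * c) {v w : R}
    (hvw : (v, w) ≠ (0, 0)) : 0 < a * v ^ 2 + 2 * b * v * w + c * w ^ 2 := by
  suffices 0 < (a * v + b * w) ^ 2 + (a * c - b ^ 2) * w ^ 2 by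
    refine pos_of_mul_pos_right (a := a) ?_ ha.le
    calc 0 < (a * v + b * w) ^ 2 + (a * c - b ^ 2) * w ^ 2 := this
      _ = a * (a * v ^ 2 + 2 * b * v * w + c * w ^ 2) := by ring
  rcases eq_or_ne w 0 with rfl | hw
  · have hv : v ≠ 0 := by simpa using hvw
    simpa using sq_pos_of_ne_zero (mul_ne_zero ha.ne' hv)
  · exact add_pos_of_nonneg_of_pos (sq_nonneg _)
      (mul_pos (sub_pos.2 h) (sq_pos_of_ne_zero hw))

end BinaryForm

theorem two_mul_lt_add_of_sq_lt_mul {k x y : R} (hxy : 0 ≤ x + y) (h : k ^ 2 < x * y) :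
    2 * k < x + y := by
  refine lt_of_pow_lt_pow_left₀ 2 hxy ?_
  calc (2 * k) ^ 2 = 4 * k ^ 2 := by ring
    _ < 4 * (x * y) := by gcongr
    _ = 4 * x * y := by ring
    _ ≤ (x + y) ^ 2 := four_mul_le_sq_add x y

theorem sq_add_two_mul_mul_add_sq_nonneg {k x z : R} (hx : 0 ≤ x) (hz : -k ≤ z) :
    0 ≤ x ^ 2 + 2 * z * x + k ^ 2 :=
  calc 0 ≤ (x - k) ^ 2 + 2 * x * (z + k) :=
        add_nonneg (sq_nonneg _) (mul_nonneg (by positivity) (neg_le_iff_add_nonneg.1 hz))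
    _ = x ^ 2 + 2 * z * x + k ^ 2 := by ring

section EigenvalueEquation

variable {k z l1 l2 l3 : R}

theorem add_add_two_mul_pos_of_sq_lt_mul (hz : -k < z) (h2 : 0 < l2) (h3 : 0 < l3)
    (h23 : k ^ 2 < l2 * l3) : 0 < l2 + l3 + 2 * z := by
  linarith [two_mul_lt_add_of_sq_lt_mul (add_pos h2 h3).le h23]

theorem nonneg_of_eigenvalue_eq (hz : -k < z) (h2 : 0 < l2) (h3 : 0 < l3)
    (h23 : k ^ 2 < l2 * l3) (heq : l1 * l2 * l3 = k ^ 2 * (l1 + l2 + l3 + 2 * z)) : 0 ≤ l1 := by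
  refine nonneg_of_mul_nonneg_left (b := l2 * l3 - k ^ 2) ?_ (sub_pos.2 h23)
  calc 0 ≤ k ^ 2 * (l2 + l3 + 2 * z) :=
        mul_nonneg (sq_nonneg k) (add_add_two_mul_pos_of_sq_lt_mul hz h2 h3 h23).le
    _ = l1 * (l2 * l3 - k ^ 2) := by linear_combination -heq

theorem esymm_two_shifted_pos (hz : -k < z) (h2 : 0 < l2) (h3 : 0 < l3)
    (h23 : k ^ 2 < l2 * l3) (heq : l1 * l2 * l3 = k ^ 2 * (l1 + l2 + l3 + 2 * z)) :
    0 < (l1 + z) * (l2 + z) + (l1 + z) * (l3 + z) + (l2 + z) * (l3 + z) := by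
  have h1 : 0 ≤ l1 := nonneg_of_eigenvalue_eq hz h2 h3 h23 heq
  rcases le_or_gt 0 z with hz0 | hz0
  · positivity
  · have hk : 0 < k := by linarith
    have hzk : z ^ 2 < k ^ 2 := sq_lt_sq' hz (hz0.trans hk)
    refine pos_of_mul_pos_right (a := k ^ 2) ?_ (sq_nonneg k)
    calc 0 < (l2 * l3 - k ^ 2) * (l1 ^ 2 + 2 * z * l1 + k ^ 2) + k ^ 2 * (k ^ 2 - z ^ 2) :=
          add_pos_of_nonneg_of_pos
            (mul_nonneg (sub_pos.2 h23).le (sq_add_two_mul_mul_add_sq_nonneg h1 hz.le))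
            (mul_pos (pow_pos hk 2) (sub_pos.2 hzk))
      _ = k ^ 2 * ((l1 + z) * (l2 + z) + (l1 + z) * (l3 + z) + (l2 + z) * (l3 + z)) := by
        linear_combination (l1 + 2 * z) * heq

theorem quadratic_pos_def_general (hz : -k < z) (h2 : 0 < l2) (h3 : 0 < l3)
    (h23 : k ^ 2 < l2 * l3) (heq : l1 * l2 * l3 = k ^ 2 * (l1 + l2 + l3 + 2 * z)) :
    (0 < 2 * (l2 + l3 + 2 * z) * ((l1 + l2 + l3) + 2 * z) ∧
      0 < 2 * (l1 + l3 + 2 * z) * ((l1 + l2 + l3) + 2 * z) ∧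
      0 < 2 * (l2 + l3 + 2 * z) * ((l1 + l2 + l3) + 2 * z)
            * (2 * (l1 + l3 + 2 * z) * ((l1 + l2 + l3) + 2 * z))
          - (2 * (l3 + z) * ((l1 + l2 + l3) + 2 * z)) ^ 2) ∧
    ∀ v1 v2 : R, (v1, v2) ≠ (0, 0) →
      0 < 2 * (l2 + l3 + 2 * z) * ((l1 + l2 + l3) + 2 * z) * v1 ^ 2
            + 2 * (2 * (l3 + z) * ((l1 + l2 + l3) + 2 * z)) * v1 * v2
            + 2 * (l1 + l3 + 2 * z) * ((l1 + l2 + l3) + 2 * z) * v2 ^ 2 := by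
  have hA : 0 < l2 + l3 + 2 * z := add_add_two_mul_pos_of_sq_lt_mul hz h2 h3 h23
  have hS : 0 < l1 + l2 + l3 + 2 * z := by
    linarith [nonneg_of_eigenvalue_eq hz h2 h3 h23 heq]
  have hE := esymm_two_shifted_pos hz h2 h3 h23 heq
  have ha : 0 < 2 * (l2 + l3 + 2 * z) * (l1 + l2 + l3 + 2 * z) := mul_pos (mul_pos two_pos hA) hS
  have hdet : 0 < 2 * (l2 + l3 + 2 * z) * (l1 + l2 + l3 + 2 * z)
        * (2 * (l1 + l3 + 2 * z) * (l1 + l2 + l3 + 2 * z))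
      - (2 * (l3 + z) * (l1 + l2 + l3 + 2 * z)) ^ 2 :=
    calc 0 < 4 * (l1 + l2 + l3 + 2 * z) ^ 2
          * ((l1 + z) * (l2 + z) + (l1 + z) * (l3 + z) + (l2 + z) * (l3 + z)) :=
          mul_pos (mul_pos four_pos (pow_pos hS 2)) hE
      _ = _ := by ring
  exact ⟨⟨ha, pos_right_of_sq_lt_mul ha (sub_pos.1 hdet), hdet⟩,
    fun _ _ => binary_form_pos_of_sq_lt_mul ha (sub_pos.1 hdet)⟩

end EigenvalueEquation

end

/-- Under the dHYM eigenvalue constraints in dimension 3, the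
coefficients `a := 2(λ₂+λ₃+2z)(S+2z)`, `b := 2(λ₃+z)(S+2z)`, `c := 2(λ₁+λ₃+2z)(S+2z)`
(with `S := λ₁+λ₂+λ₃`) satisfy `a > 0`, `c > 0` and `ac − b² > 0`; consequently the
quadratic form `(v₁, v₂) ↦ a v₁² + 2b v₁v₂ + c v₂²` is positive definite on `ℝ²`. -/
theorem quadratic_pos_def (θ : ℝ) (hθ : θ ∈ Set.Ioo 0 π) (z : ℝ)
    (hz : -(1 / Real.sin θ) < z) (l1 l2 l3 : ℝ)
    (h1 : 0 < l1) (h2 : 0 < l2) (h3 : 0 < l3)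
    (h12 : 1 / Real.sin θ ^ 2 < l1 * l2)
    (h13 : 1 / Real.sin θ ^ 2 < l1 * l3)
    (h23 : 1 / Real.sin θ ^ 2 < l2 * l3)
    (heq : l1 * l2 * l3 = (1 / Real.sin θ ^ 2) * (l1 + l2 + l3 + 2 * z)) :
    (0 < 2 * (l2 + l3 + 2 * z) * ((l1 + l2 + l3) + 2 * z) ∧
      0 < 2 * (l1 + l3 + 2 * z) * ((l1 + l2 + l3) + 2 * z) ∧
      0 < 2 * (l2 + l3 + 2 * z) * ((l1 + l2 + l3) + 2 * z)
            * (2 * (l1 + l3 + 2 * z) * ((l1 + l2 + l3) + 2 * z))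
          - (2 * (l3 + z) * ((l1 + l2 + l3) + 2 * z)) ^ 2) ∧
    ∀ v1 v2 : ℝ, (v1, v2) ≠ (0, 0) →
      0 < 2 * (l2 + l3 + 2 * z) * ((l1 + l2 + l3) + 2 * z) * v1 ^ 2
            + 2 * (2 * (l3 + z) * ((l1 + l2 + l3) + 2 * z)) * v1 * v2
            + 2 * (l1 + l3 + 2 * z) * ((l1 + l2 + l3) + 2 * z) * v2 ^ 2 := by
  rw [← one_div_pow] at h23 heq
  exact quadratic_pos_def_general hz h2 h3 h23 heq
end

section
/- Let θ ∈ (0, π) and set ε := 1/sin(θ) − |cos(θ)/sin(θ)| (note ε > 0). Let δ ∈ (0, ε), t ∈ [0, 1], let f be a real number with f > −ε + δ, let d ≥ 0, and set z := t·f + d + cos(θ)/sin(θ). If λ and μ are positive real numbers with λμ > 1/sin²(θ), then λ + μ + 2z > 2δ. -/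
open Real

section OrderedRing

variable {R : Type*} [CommRing R] [LinearOrder R] [IsStrictOrderedRing R]

theorem two_mul_lt_add_of_sq_lt_mul_s14 {a b c : R} (hab : 0 ≤ a + b) (hc : c ^ 2 < a * b) :
    2 * c < a + b := by
  refine lt_of_pow_lt_pow_left₀ 2 hab ?_
  calc
    (2 * c) ^ 2 = 4 * c ^ 2 := by ring
    _ < 4 * (a * b) := by gcongr
    _ = 4 * a * b := by ring
    _ ≤ (a + b) ^ 2 := four_mul_le_sq_add a b

theorem le_mul_of_mem_Icc_of_nonpos_of_le {t x y : R} (ht : t ∈ Set.Icc 0 1) (hx : x ≤ 0)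
    (hxy : x ≤ y) : x ≤ t * y :=
  calc
    x ≤ t * x := le_mul_of_le_one_left hx ht.2
    _ ≤ t * y := mul_le_mul_of_nonneg_left hxy ht.1

/-- Here `c`, `k` and `c - |k|` play the roles of `csc θ`, `cot θ` and `ε`. -/
theorem sum_plus_2z_lower_bound_general {c k δ t f d lam mu : R} (hδ : δ ≤ c - |k|)
    (ht : t ∈ Set.Icc 0 1) (hf : -(c - |k|) + δ ≤ f) (hd : 0 ≤ d)
    (hsum : 0 ≤ lam + mu) (hprod : c ^ 2 < lam * mu) :
    2 * δ < lam + mu + 2 * (t * f + d + k) := by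
  have htf : -(c - |k|) + δ ≤ t * f :=
    le_mul_of_mem_Icc_of_nonpos_of_le ht (by linarith) hf
  have hz : δ - c ≤ t * f + d + k := by linarith [neg_abs_le k]
  calc
    2 * δ = 2 * c + 2 * (δ - c) := by ring
    _ < lam + mu + 2 * (t * f + d + k) :=
      add_lt_add_of_lt_of_le (two_mul_lt_add_of_sq_lt_mul_s14 hsum hprod) (by gcongr)

end OrderedRing

/-- Let `θ ∈ (0, π)` and `ε := 1/sin θ − |cos θ/sin θ| > 0`. Let
`δ ∈ (0, ε)`, `t ∈ [0, 1]`, `f > −ε + δ`, `d ≥ 0`, and `z := t f + d + cos θ/sin θ`.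
If `λ, μ > 0` with `λμ > 1/sin²θ`, then `λ + μ + 2z > 2δ`. -/
theorem sum_plus_2z_lower_bound (θ : ℝ) (hθ : θ ∈ Set.Ioo 0 π)
    (hε : 0 < 1 / Real.sin θ - |Real.cos θ / Real.sin θ|)
    (δ : ℝ) (hδ : δ ∈ Set.Ioo 0 (1 / Real.sin θ - |Real.cos θ / Real.sin θ|))
    (t : ℝ) (ht : t ∈ Set.Icc (0 : ℝ) 1)
    (f : ℝ) (hf : -(1 / Real.sin θ - |Real.cos θ / Real.sin θ|) + δ < f)
    (d : ℝ) (hd : 0 ≤ d)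
    (lam mu : ℝ) (hlam : 0 < lam) (hmu : 0 < mu)
    (hprod : 1 / Real.sin θ ^ 2 < lam * mu) :
    2 * δ < lam + mu + 2 * (t * f + d + Real.cos θ / Real.sin θ) :=
  sum_plus_2z_lower_bound_general hδ.2.le ht hf.le hd (add_pos hlam hmu).le
    (by rwa [one_div_pow])
end
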